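/- For every integer $d \ge 1$, the four quantities $C_0 = \sum_{k+m+n=d,\ n \text{ odd}} \frac{v^{\binom{n+1}{2}-2km+2k}}{[n]![2k]^{!!}[2m]^{!!}}$, $C_1 = \sum_{k+m+n=d,\ n \text{ even}} \frac{v^{\binom{n+1}{2}-2km+2k}}{[n]![2k]^{!!}[2m]^{!!}}$, $D_0 = \sum_{t+k+m+n=d,\ n \text{ even}} \frac{v^{t^2-2dt+t+2nt+\binom{n+1}{2}-2km-2m}}{[n]![2k]^{!!}[2m]^{!!}}(v-v^{-1})^t$, and $D_1 = \sum_{t+k+m+n=d,\ n \text{ odd}} \frac{v^{t^2-2dt+t+2nt+\binom{n+1}{2}-2km-2m}}{[n]![2k]^{!!}[2m]^{!!}}(v-v^{-1})^t$ are all equal to $\dfrac{v^d \prod_{j=1}^{d-1}(v^j+v^{-j})}{[d]!}$. -/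

import Mathlib

noncomputable section

abbrev K : Type := RatFunc ℚ

/-- The indeterminate `v` in `ℚ(v)`. -/
def v : K := RatFunc.X

/-- Quantum integer `[m] = (v^m - v^{-m})/(v - v^{-1})`. -/
def qint (m : ℤ) : K := (v ^ m - v ^ (-m)) / (v - v⁻¹)

/-- Quantum factorial `[r]! = ∏_{i=1}^r [i]`. -/
def qfact (r : ℕ) : K := ∏ i ∈ Finset.range r, qint ((i : ℤ) + 1)

/-- Quantum double factorial `[2r]!! = ∏_{i=1}^r [2i]`. -/
def qdfact (r : ℕ) : K := ∏ i ∈ Finset.range r, qint (2 * ((i : ℤ) + 1))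

/-- Balanced Gaussian binomial coefficient `[m][m-1]⋯[m-r+1]/[r]!`. -/
def qbinom (m : ℤ) (r : ℕ) : K := (∏ i ∈ Finset.range r, qint (m - (i : ℤ))) / qfact r

/-- Gaussian binomial with integer lower index, vanishing for negative lower index. -/
def qbinomZ (m r : ℤ) : K := if 0 ≤ r then qbinom m r.toNat else 0

/-- The sum $C_{par}$ over triples $k+m+n=d$ with $n \equiv par \pmod 2$. -/
def Csum (d par : ℕ) : K :=
  ∑ k ∈ Finset.range (d + 1), ∑ m ∈ Finset.range (d + 1 - k),
    if (d - k - m) % 2 = par then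
      v ^ ((((d - k - m) * (d - k - m + 1) / 2 : ℕ) : ℤ)
            - 2 * (k : ℤ) * m + 2 * (k : ℤ)) /
        (qfact (d - k - m) * qdfact k * qdfact m)
    else 0

/-- The sum $D_{par}$ over quadruples $t+k+m+n=d$ with $n \equiv par \pmod 2$. -/
def Dsum (d par : ℕ) : K :=
  ∑ t ∈ Finset.range (d + 1), ∑ k ∈ Finset.range (d + 1 - t),
    ∑ m ∈ Finset.range (d + 1 - t - k),
      if (d - t - k - m) % 2 = par then
        v ^ ((t : ℤ) ^ 2 - 2 * (d : ℤ) * t + (t : ℤ)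
              + 2 * ((d - t - k - m : ℕ) : ℤ) * t
              + (((d - t - k - m) * (d - t - k - m + 1) / 2 : ℕ) : ℤ)
              - 2 * (k : ℤ) * m - 2 * (m : ℤ)) *
          (v - v⁻¹) ^ t /
          (qfact (d - t - k - m) * qdfact k * qdfact m)
      else 0

open Finset in
lemma assoc_aux (d : ℕ) (F : ℕ → ℕ → ℕ → K) :
    ∑ p ∈ antidiagonal d, ∑ q ∈ antidiagonal p.2, F p.1 q.1 q.2
      = ∑ p ∈ antidiagonal d, ∑ q ∈ antidiagonal p.1, F q.1 q.2 p.2 := by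
  rw [Finset.sum_sigma', Finset.sum_sigma']
  refine Finset.sum_bij' (fun x _ => ⟨(x.1.1 + x.2.1, x.2.2), (x.1.1, x.2.1)⟩)
    (fun x _ => ⟨(x.2.1, x.2.2 + x.1.2), (x.2.2, x.1.2)⟩) ?_ ?_ ?_ ?_ ?_
  · rintro ⟨⟨a, b⟩, ⟨c, e⟩⟩ h
    simp only [mem_sigma, HasAntidiagonal.mem_antidiagonal] at h ⊢
    exact ⟨by omega, trivial⟩
  · rintro ⟨⟨a, b⟩, ⟨c, e⟩⟩ h
    simp only [mem_sigma, HasAntidiagonal.mem_antidiagonal] at h ⊢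
    exact ⟨by omega, trivial⟩
  · rintro ⟨⟨a, b⟩, ⟨c, e⟩⟩ h
    simp only [mem_sigma, HasAntidiagonal.mem_antidiagonal] at h
    obtain ⟨h1, rfl⟩ := h
    rfl
  · rintro ⟨⟨a, b⟩, ⟨c, e⟩⟩ h
    simp only [mem_sigma, HasAntidiagonal.mem_antidiagonal] at h
    obtain ⟨h1, rfl⟩ := h
    rfl
  · rintro ⟨⟨a, b⟩, ⟨c, e⟩⟩ h
    rfl

open Finset in
lemma tri_aux (d : ℕ) (F : ℕ → ℕ → ℕ → K) :
    ∑ k ∈ range (d + 1), ∑ m ∈ range (d + 1 - k), F k m (d - k - m)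
      = ∑ p ∈ antidiagonal d, ∑ q ∈ antidiagonal p.1, F q.1 q.2 p.2 := by
  rw [← assoc_aux, Finset.Nat.sum_antidiagonal_eq_sum_range_succ_mk]
  refine sum_congr rfl fun k hk => ?_
  have hk' := mem_range.1 hk
  rw [Finset.Nat.sum_antidiagonal_eq_sum_range_succ_mk, show d + 1 - k = (d - k) + 1 by omega]

lemma v_ne : v ≠ 0 := RatFunc.X_ne_zero

lemma vpow_ne (n : ℕ) (hn : 0 < n) : v ^ n ≠ 1 := by
  intro h
  have h2 : (algebraMap (Polynomial ℚ) (RatFunc ℚ)) (Polynomial.X ^ n) = algebraMap _ _ 1 := by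
    simpa [v, RatFunc.algebraMap_X] using h
  have h3 := RatFunc.algebraMap_injective ℚ h2
  have := congrArg Polynomial.natDegree h3
  simp at this
  omega

lemma qsub_ne : v - v⁻¹ ≠ 0 := by
  have := vpow_ne 2 (by norm_num)
  have h := v_ne
  intro h0
  apply this
  field_simp at h0
  linear_combination h0

lemma qint_ne (n : ℕ) : qint ((n : ℤ) + 1) ≠ 0 := by
  unfold qint
  have := vpow_ne (2 * (n + 1)) (by omega)
  refine div_ne_zero ?_ qsub_ne
  intro h0
  apply this
  have h := v_ne
  rw [zpow_neg, sub_eq_zero] at h0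
  have : v ^ ((n : ℤ) + 1) = v ^ (n + 1) := by exact_mod_cast zpow_natCast v (n + 1)
  rw [this] at h0
  rw [two_mul, pow_add]
  nth_rewrite 1 [h0]
  exact inv_mul_cancel₀ (pow_ne_zero _ h)

lemma qint2_ne (n : ℕ) : qint (2 * ((n : ℤ) + 1)) ≠ 0 := by
  have := qint_ne (2 * n + 1)
  push_cast at this
  convert this using 2
  ring

lemma qfact_succ (n : ℕ) : qfact (n + 1) = qfact n * qint ((n : ℤ) + 1) := Finset.prod_range_succ _ _
lemma qdfact_succ (n : ℕ) : qdfact (n + 1) = qdfact n * qint (2 * ((n : ℤ) + 1)) :=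
  Finset.prod_range_succ _ _
lemma qfact_ne (n : ℕ) : qfact n ≠ 0 := Finset.prod_ne_zero_iff.2 fun i _ => qint_ne i
lemma qdfact_ne (n : ℕ) : qdfact n ≠ 0 := Finset.prod_ne_zero_iff.2 fun i _ => qint2_ne i
lemma qint_zero : qint 0 = 0 := by simp [qint]
lemma qint_add (a b : ℤ) : qint (a + b) = qint a * v ^ b + v ^ (-a) * qint b := by
  unfold qint
  have h := v_ne
  rw [neg_add, zpow_add₀ h, zpow_add₀ h]
  ring

lemma qint_double (a : ℤ) : qint (2 * a) = qint a * (v ^ a + v ^ (-a)) := by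
  rw [two_mul, qint_add]; ring

/-- the summand of the inner sums -/
def aa (k m : ℕ) : K := v ^ (-2 * (k : ℤ) * m + 2 * (k : ℤ)) / (qdfact k * qdfact m)

lemma aa_left (k m : ℕ) :
    aa (k + 1) m * qint (2 * ((k : ℤ) + 1)) = aa k m * v ^ (2 - 2 * (m : ℤ)) := by
  unfold aa
  have h1 := qdfact_ne k
  have h2 := qdfact_ne m
  have h3 := qint2_ne k
  rw [qdfact_succ]
  have : v ^ (-2 * ((k + 1 : ℕ) : ℤ) * m + 2 * ((k + 1 : ℕ) : ℤ))
    = v ^ (-2 * (k : ℤ) * m + 2 * (k : ℤ)) * v ^ (2 - 2 * (m : ℤ)) := by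
    rw [← zpow_add₀ v_ne]; congr 1; push_cast; ring
  rw [this]
  generalize v ^ (-2 * (k : ℤ) * m + 2 * (k : ℤ)) = x
  generalize v ^ (2 - 2 * (m : ℤ)) = y
  field_simp

lemma aa_right (k m : ℕ) :
    aa k (m + 1) * qint (2 * ((m : ℤ) + 1)) = aa k m * v ^ (- 2 * (k : ℤ)) := by
  unfold aa
  have h1 := qdfact_ne k
  have h2 := qdfact_ne m
  have h3 := qint2_ne m
  rw [qdfact_succ]
  have : v ^ (-2 * (k : ℤ) * ((m + 1 : ℕ) : ℤ) + 2 * (k : ℤ))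
    = v ^ (-2 * (k : ℤ) * m + 2 * (k : ℤ)) * v ^ (-2 * (k : ℤ)) := by
    rw [← zpow_add₀ v_ne]; congr 1; push_cast; ring
  rw [this]
  generalize v ^ (-2 * (k : ℤ) * m + 2 * (k : ℤ)) = x
  generalize v ^ (-2 * (k : ℤ)) = y
  field_simp

lemma aa_swap (k m : ℕ) : aa m k = aa k m * v ^ (2 * (m : ℤ) - 2 * (k : ℤ)) := by
  unfold aa
  have : v ^ (-2 * (m : ℤ) * k + 2 * (m : ℤ))
    = v ^ (-2 * (k : ℤ) * m + 2 * (k : ℤ)) * v ^ (2 * (m : ℤ) - 2 * (k : ℤ)) := by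
    rw [← zpow_add₀ v_ne]; congr 1; ring
  rw [this, mul_comm (qdfact m)]
  ring

def AA : ℕ → K
  | 0 => 1
  | n + 1 => AA n * v ^ (1 - (n : ℤ)) / qint ((n : ℤ) + 1)

lemma AA_succ (n : ℕ) : AA (n + 1) = AA n * v ^ (1 - (n : ℤ)) / qint ((n : ℤ) + 1) := rfl

open Finset in
/-- splitting a sum over an antidiagonal -/
lemma split_aux (s : ℕ) (f g : ℕ → ℕ → K) (hf : f 0 (s + 1) = 0) (hg : g (s + 1) 0 = 0) :
    ∑ p ∈ antidiagonal (s + 1), (f p.1 p.2 + g p.1 p.2)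
      = ∑ p ∈ antidiagonal s, (f (p.1 + 1) p.2 + g p.1 (p.2 + 1)) := by
  rw [sum_add_distrib, sum_add_distrib, Finset.Nat.sum_antidiagonal_succ,
    Finset.Nat.sum_antidiagonal_succ' (f := fun p => g p.1 p.2)]
  simp [hf, hg]

open Finset in
lemma sum_aa (s : ℕ) : ∑ p ∈ antidiagonal s, aa p.1 p.2 = AA s := by
  induction s with
  | zero => simp [aa, AA, qdfact]
  | succ s ih =>
    have key : (∑ p ∈ antidiagonal (s + 1), aa p.1 p.2) * qint (2 * ((s : ℤ) + 1))
        = (v ^ (2 : ℤ) + v ^ (-2 * (s : ℤ))) * AA s := by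
      rw [sum_mul]
      have h1 : ∀ p ∈ antidiagonal (s + 1), aa p.1 p.2 * qint (2 * ((s : ℤ) + 1))
          = aa p.1 p.2 * qint (2 * (p.1 : ℤ)) * v ^ (2 * (p.2 : ℤ))
            + aa p.1 p.2 * qint (2 * (p.2 : ℤ)) * v ^ (-(2 * (p.1 : ℤ))) := by
        intro p hp
        have hp' : ((p.1 : ℤ)) + p.2 = s + 1 := by exact_mod_cast HasAntidiagonal.mem_antidiagonal.1 hp
        rw [← hp', mul_add, qint_add]; ring
      rw [sum_congr rfl h1,
        split_aux s (fun k m => aa k m * qint (2 * (k : ℤ)) * v ^ (2 * (m : ℤ)))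
          (fun k m => aa k m * qint (2 * (m : ℤ)) * v ^ (-(2 * (k : ℤ))))
          (by simp [qint_zero]) (by simp [qint_zero]), add_mul, sum_add_distrib]
      congr 1
      · rw [← ih, mul_sum]
        refine sum_congr rfl fun p _ => ?_
        push_cast
        rw [aa_left, mul_assoc, ← zpow_add₀ v_ne, mul_comm]
        congr 2; ring
      · rw [← ih, mul_sum, ← Finset.Nat.sum_antidiagonal_swap]
        refine sum_congr rfl fun p hp => ?_
        have hp' : ((p.1 : ℤ)) + p.2 = s := by exact_mod_cast HasAntidiagonal.mem_antidiagonal.1 hp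
        simp only [Prod.fst_swap, Prod.snd_swap]
        push_cast
        rw [aa_right, aa_swap, mul_assoc, mul_assoc, ← zpow_add₀ v_ne, ← zpow_add₀ v_ne, mul_comm]
        congr 2; rw [← hp']; ring
    have h2 := qint2_ne s
    apply mul_right_cancel₀ h2
    rw [key, qint_double, AA_succ]
    have h3 := qint_ne s
    have : v ^ (2 : ℤ) + v ^ (-2 * (s : ℤ))
        = v ^ (1 - (s : ℤ)) * (v ^ ((s : ℤ) + 1) + v ^ (-((s : ℤ) + 1))) := by
      rw [mul_add, ← zpow_add₀ v_ne, ← zpow_add₀ v_ne]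
      congr 2 <;> ring
    rw [this]
    field_simp

def ee (n : ℕ) : K := v ^ ((n * (n + 1) / 2 : ℕ) : ℤ) / qfact n

lemma ee_succ (n : ℕ) : ee (n + 1) * qint ((n : ℤ) + 1) = ee n * v ^ ((n : ℤ) + 1) := by
  unfold ee
  have h : (n + 1) * (n + 1 + 1) / 2 = n * (n + 1) / 2 + (n + 1) := by
    rw [show (n + 1) * (n + 1 + 1) = n * (n + 1) + (n + 1) * 2 by ring]
    exact Nat.add_mul_div_right _ _ (by norm_num)
  have h1 := qfact_ne n
  have h3 := qint_ne n
  rw [h, qfact_succ, Nat.cast_add, zpow_add₀ v_ne]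
  push_cast
  field_simp

lemma AA_mul (n : ℕ) : AA (n + 1) * qint ((n : ℤ) + 1) = AA n * v ^ (1 - (n : ℤ)) := by
  have h3 := qint_ne n
  rw [AA_succ]; field_simp

def PP (ε : K) (d : ℕ) : K := ∑ p ∈ Finset.HasAntidiagonal.antidiagonal d, ε ^ p.2 * ee p.2 * AA p.1

open Finset in
lemma PP_succ (ε : K) (d : ℕ) :
    PP ε (d + 1) * qint ((d : ℤ) + 1) = v * (ε * v ^ (d : ℤ) + v ^ (-(d : ℤ))) * PP ε d := by
  unfold PP
  rw [sum_mul]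
  have h1 : ∀ p ∈ antidiagonal (d + 1), ε ^ p.2 * ee p.2 * AA p.1 * qint ((d : ℤ) + 1)
      = ε ^ p.2 * ee p.2 * (AA p.1 * qint (p.1 : ℤ)) * v ^ (-(p.2 : ℤ))
        + ε ^ p.2 * (ee p.2 * qint (p.2 : ℤ)) * AA p.1 * v ^ (p.1 : ℤ) := by
    intro p hp
    have hp' : ((p.1 : ℤ)) + p.2 = d + 1 := by exact_mod_cast HasAntidiagonal.mem_antidiagonal.1 hp
    rw [← hp', add_comm, qint_add]; ring
  rw [sum_congr rfl h1,
    split_aux d (fun s n => ε ^ n * ee n * (AA s * qint (s : ℤ)) * v ^ (-(n : ℤ)))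
      (fun s n => ε ^ n * (ee n * qint (n : ℤ)) * AA s * v ^ (s : ℤ))
      (by simp [qint_zero]) (by simp [qint_zero]), mul_sum]
  refine sum_congr rfl fun p hp => ?_
  have hp' : ((p.1 : ℤ)) + p.2 = d := by exact_mod_cast HasAntidiagonal.mem_antidiagonal.1 hp
  push_cast
  rw [AA_mul, ee_succ, ← hp']
  simp only [sub_eq_add_neg, neg_add, zpow_add₀ v_ne, zpow_one, pow_succ]
  ring

def RR (d : ℕ) : K :=
  v ^ d * (∏ j ∈ Finset.Icc 1 (d - 1), (v ^ (j : ℤ) + v ^ (-(j : ℤ)))) / qfact d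

lemma RR_succ (d : ℕ) : RR (d + 2) * qint (((d + 1 : ℕ) : ℤ) + 1)
    = v * (v ^ ((d + 1 : ℕ) : ℤ) + v ^ (-((d + 1 : ℕ) : ℤ))) * RR (d + 1) := by
  unfold RR
  have h1 := qfact_ne (d + 1)
  have h3 := qint_ne (d + 1)
  rw [show d + 2 - 1 = d + 1 by omega, Finset.prod_Icc_succ_top (by omega), qfact_succ (d + 1),
    show d + 1 - 1 = d by omega, pow_succ v (d + 1)]
  generalize ∏ j ∈ Finset.Icc 1 d, (v ^ (j : ℤ) + v ^ (-(j : ℤ))) = x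
  generalize v ^ ((d + 1 : ℕ) : ℤ) + v ^ (-((d + 1 : ℕ) : ℤ)) = y
  field_simp

lemma qint_one : qint 1 = 1 := by
  unfold qint
  rw [zpow_one, zpow_neg, zpow_one]
  exact div_self qsub_ne

lemma PP_zero (ε : K) : PP ε 0 = 1 := by simp [PP, ee, AA, qfact]

lemma PP_pos (d : ℕ) : PP 1 (d + 1) = 2 * RR (d + 1) := by
  induction d with
  | zero =>
    have := PP_succ 1 0
    simp [qint_one, PP_zero] at this
    simp [RR, this, qfact, qint_one]
    ring
  | succ d ih =>
    apply mul_right_cancel₀ (qint_ne (d + 1))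
    have h := RR_succ d
    rw [PP_succ, ih]
    linear_combination (-2) * h

lemma PP_neg (d : ℕ) : PP (-1) (d + 1) = 0 := by
  induction d with
  | zero =>
    have := PP_succ (-1) 0
    simpa [qint_one, PP_zero] using this
  | succ d ih =>
    apply mul_right_cancel₀ (qint_ne (d + 1))
    rw [PP_succ, ih]
    ring

open Finset in
lemma par_sum (d : ℕ) (hd : 1 ≤ d) (par : ℕ) (hp : par = 0 ∨ par = 1) :
    ∑ p ∈ antidiagonal d, (if p.2 % 2 = par then ee p.2 else 0) * AA p.1 = RR d := by
  obtain ⟨d, rfl⟩ : ∃ e, d = e + 1 := ⟨d - 1, by omega⟩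
  have h1 := PP_pos d
  have h2 := PP_neg d
  have h3 : ∑ p ∈ antidiagonal (d + 1), (if p.2 % 2 = par then ee p.2 else 0) * AA p.1
      = (PP 1 (d + 1) + (-1) ^ par * PP (-1) (d + 1)) / 2 := by
    unfold PP
    rw [mul_sum, ← sum_add_distrib, sum_div]
    refine sum_congr rfl fun p _ => ?_
    rcases Nat.even_or_odd p.2 with h | h
    · rw [h.neg_one_pow]
      have h' := Nat.even_iff.1 h
      rcases hp with rfl | rfl <;> simp [h']
    · rw [h.neg_one_pow]
      have h' := Nat.odd_iff.1 h
      rcases hp with rfl | rfl <;> simp [h']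
  rw [h3, h1, h2]
  ring

open Finset in
lemma Csum_eq (d : ℕ) (par : ℕ) :
    Csum d par = ∑ p ∈ antidiagonal d, (if p.2 % 2 = par then ee p.2 else 0) * AA p.1 := by
  unfold Csum
  rw [tri_aux d (fun k m n => if n % 2 = par then
      v ^ (((n * (n + 1) / 2 : ℕ) : ℤ) - 2 * (k : ℤ) * m + 2 * (k : ℤ)) /
        (qfact n * qdfact k * qdfact m) else 0)]
  refine sum_congr rfl fun p _ => ?_
  rw [← sum_aa, mul_sum]
  refine sum_congr rfl fun q _ => ?_
  split_ifs
  · rw [ee, aa, div_mul_div_comm, ← zpow_add₀ v_ne, mul_assoc (qfact _)]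
    congr 2; ring
  · simp

def tt (t s : ℕ) : K :=
  v ^ (-(t : ℤ) ^ 2 - 2 * (s : ℤ) * t + t - 2 * (s : ℤ)) * (v - v⁻¹) ^ t * AA s

open Finset in
lemma sum_tt (N : ℕ) : ∑ p ∈ antidiagonal N, tt p.1 p.2 = AA N := by
  induction N with
  | zero => simp [tt]
  | succ N ih =>
    rw [Finset.Nat.sum_antidiagonal_succ]
    have h : ∀ p ∈ antidiagonal N, tt (p.1 + 1) p.2
        = v ^ (-2 * (N : ℤ)) * (v - v⁻¹) * tt p.1 p.2 := by
      intro p hp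
      have hp' : ((p.1 : ℤ)) + p.2 = N := by exact_mod_cast HasAntidiagonal.mem_antidiagonal.1 hp
      unfold tt
      have : v ^ (-((p.1 + 1 : ℕ) : ℤ) ^ 2 - 2 * (p.2 : ℤ) * ((p.1 + 1 : ℕ) : ℤ)
          + ((p.1 + 1 : ℕ) : ℤ) - 2 * (p.2 : ℤ))
          = v ^ (-2 * (N : ℤ)) *
            v ^ (-(p.1 : ℤ) ^ 2 - 2 * (p.2 : ℤ) * p.1 + p.1 - 2 * (p.2 : ℤ)) := by
        rw [← zpow_add₀ v_ne, ← hp']; congr 1; push_cast; ring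
      rw [this, pow_succ]
      ring
    rw [sum_congr rfl h, ← mul_sum, ih]
    apply mul_right_cancel₀ (qint_ne N)
    have hA := AA_mul N
    have hq : v ^ (1 - (N : ℤ)) * (1 - v ^ (-(2 : ℤ) * (N + 1)))
        = v ^ (-2 * (N : ℤ)) * (v - v⁻¹) * qint ((N : ℤ) + 1) := by
      unfold qint
      rw [mul_assoc, mul_div_cancel₀ _ qsub_ne, mul_sub, mul_sub, ← zpow_add₀ v_ne,
        ← zpow_add₀ v_ne, ← zpow_add₀ v_ne, mul_one]
      congr 2 <;> ring
    have h0 : tt 0 (N + 1) = v ^ (-(2 : ℤ) * (N + 1)) * AA (N + 1) := by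
      unfold tt
      simp
    rw [h0]
    linear_combination (v ^ (-(2 : ℤ) * (N + 1)) - 1) * hA - AA N * hq

open Finset in
lemma Dsum_eq (d : ℕ) (par : ℕ) :
    Dsum d par = ∑ p ∈ antidiagonal d, (if p.2 % 2 = par then ee p.2 else 0) * AA p.1 := by
  have h1 : Dsum d par = ∑ p ∈ antidiagonal d, ∑ q ∈ antidiagonal p.2,
      (if q.2 % 2 = par then ee q.2 else 0) * tt p.1 q.1 := by
    unfold Dsum
    rw [Finset.Nat.sum_antidiagonal_eq_sum_range_succ_mk]
    refine sum_congr rfl fun t ht => ?_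
    have ht' : t ≤ d := by have := mem_range.1 ht; omega
    rw [show d + 1 - t = (d - t) + 1 by omega]
    rw [tri_aux (d - t) (fun k m n => if n % 2 = par then
        v ^ ((t : ℤ) ^ 2 - 2 * (d : ℤ) * t + (t : ℤ) + 2 * (n : ℤ) * t
              + ((n * (n + 1) / 2 : ℕ) : ℤ) - 2 * (k : ℤ) * m - 2 * (m : ℤ)) *
          (v - v⁻¹) ^ t / (qfact n * qdfact k * qdfact m)
      else 0)]
    refine sum_congr rfl fun p hp => ?_
    have hp' := HasAntidiagonal.mem_antidiagonal.1 hp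
    have hd : (d : ℤ) = t + p.1 + p.2 := by omega
    rw [tt, ← sum_aa, mul_sum, mul_sum]
    refine sum_congr rfl fun q hq => ?_
    have hq' : ((q.1 : ℤ)) + q.2 = p.1 := by exact_mod_cast HasAntidiagonal.mem_antidiagonal.1 hq
    split_ifs
    · rw [ee, aa, hd]
      have : v ^ ((t : ℤ) ^ 2 - 2 * ((t : ℤ) + p.1 + p.2) * t + (t : ℤ) + 2 * (p.2 : ℤ) * t
              + ((p.2 * (p.2 + 1) / 2 : ℕ) : ℤ) - 2 * (q.1 : ℤ) * q.2 - 2 * (q.2 : ℤ))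
          = v ^ ((p.2 * (p.2 + 1) / 2 : ℕ) : ℤ) *
            v ^ (-(t : ℤ) ^ 2 - 2 * (p.1 : ℤ) * t + t - 2 * (p.1 : ℤ)) *
            v ^ (-2 * (q.1 : ℤ) * q.2 + 2 * (q.1 : ℤ)) := by
        rw [← zpow_add₀ v_ne, ← zpow_add₀ v_ne, ← hq']; congr 1; ring
      rw [this]
      ring
    · simp
  rw [h1, assoc_aux d (fun t s n => (if n % 2 = par then ee n else 0) * tt t s)]
  refine sum_congr rfl fun p _ => ?_
  rw [← sum_tt, mul_sum]

theorem stmt8 (d : ℕ) (hd : 1 ≤ d) :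
    Csum d 1 = v ^ d * (∏ j ∈ Finset.Icc 1 (d - 1), (v ^ (j : ℤ) + v ^ (-(j : ℤ)))) / qfact d ∧
    Csum d 0 = v ^ d * (∏ j ∈ Finset.Icc 1 (d - 1), (v ^ (j : ℤ) + v ^ (-(j : ℤ)))) / qfact d ∧
    Dsum d 0 = v ^ d * (∏ j ∈ Finset.Icc 1 (d - 1), (v ^ (j : ℤ) + v ^ (-(j : ℤ)))) / qfact d ∧
    Dsum d 1 = v ^ d * (∏ j ∈ Finset.Icc 1 (d - 1), (v ^ (j : ℤ) + v ^ (-(j : ℤ)))) / qfact d := by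
  exact ⟨(Csum_eq d 1).trans (par_sum d hd 1 (Or.inr rfl)),
    (Csum_eq d 0).trans (par_sum d hd 0 (Or.inl rfl)),
    (Dsum_eq d 0).trans (par_sum d hd 0 (Or.inl rfl)),
    (Dsum_eq d 1).trans (par_sum d hd 1 (Or.inr rfl))⟩
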